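/- arXiv:math/0112021 — 4 statements merged into one kernel-verified Lean document; each statement's English description precedes it below -/
import Mathlib

section
/- (Small gain lemma for asymptotic amplitude.) Let R be a behavior with input-value space 𝒰 and output-value space 𝒴, and S a behavior with input-value space 𝒴 and output-value space 𝒰. Suppose R has Cauchy gain γ₁ ∈ 𝒦∞ and S has Cauchy gain γ₂ ∈ 𝒦∞, and that γ₁(γ₂(r)) < r for all r > 0. Then every (ω,η) ∈ R ∩ S⁻¹ with ‖ω‖_aa < ∞ satisfies ‖ω‖_aa = ‖η‖_aa = 0. -/
open Filter Topology MeasureTheory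
open scoped ENNReal NNReal

noncomputable def aa {M : Type*} [PseudoMetricSpace M] (ω : ℝ → M) : ℝ≥0∞ :=
  Filter.limsup (fun p : ℝ × ℝ => edist (ω p.1) (ω p.2)) (Filter.atTop ×ˢ Filter.atTop)

def KInfty (γ : ℝ≥0 → ℝ≥0) : Prop :=
  Continuous γ ∧ StrictMono γ ∧ γ 0 = 0 ∧ Filter.Tendsto γ Filter.atTop Filter.atTop

noncomputable def extK (γ : ℝ≥0 → ℝ≥0) : ℝ≥0∞ → ℝ≥0∞ :=
  fun x => if x = ⊤ then ⊤ else ↑(γ x.toNNReal)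

def CauchyGain {U Y : Type*} [PseudoMetricSpace U] [PseudoMetricSpace Y]
    (R : Set ((ℝ → U) × (ℝ → Y))) (γ : ℝ≥0 → ℝ≥0) : Prop :=
  ∀ p ∈ R, aa p.2 ≤ extK γ (aa p.1)

def IncGain {U Y : Type*} [PseudoMetricSpace U] [PseudoMetricSpace Y]
    (R : Set ((ℝ → U) × (ℝ → Y))) (κ : ℝ≥0 → ℝ≥0) : Prop :=
  ∀ p₁ ∈ R, ∀ p₂ ∈ R, ∀ u₁ u₂ : U,
    Filter.Tendsto p₁.1 Filter.atTop (nhds u₁) → Filter.Tendsto p₂.1 Filter.atTop (nhds u₂) →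
    Filter.limsup (fun t => edist (p₁.2 t) (p₂.2 t)) Filter.atTop ≤ ↑(κ (nndist u₁ u₂))

def convTo {U : Type*} [PseudoMetricSpace U] (ω : ℝ → U) (U₀ : Set U) : Prop :=
  ∀ ε > 0, ∃ T : ℝ, 0 ≤ T ∧ ∀ t ≥ T, ∃ u' ∈ U₀, dist (ω t) u' ≤ ε

def omegaLim {U : Type*} [PseudoMetricSpace U] (ω : ℝ → U) : Set U :=
  {u | ∃ t : ℕ → ℝ, Filter.Tendsto t Filter.atTop Filter.atTop ∧
       Filter.Tendsto (fun i => ω (t i)) Filter.atTop (nhds u)}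

def Precomp {U : Type*} [TopologicalSpace U] (ω : ℝ → U) : Prop :=
  ∃ K : Set U, IsCompact K ∧ ∀ t : ℝ, 0 ≤ t → ω t ∈ K

def cascade {U Y Z : Type*} (R : Set ((ℝ → U) × (ℝ → Y))) (S : Set ((ℝ → Y) × (ℝ → Z))) :
    Set ((ℝ → U) × (ℝ → Z)) :=
  {p | ∃ η : ℝ → Y, (p.1, η) ∈ R ∧ (η, p.2) ∈ S}

def CauchyGainOn {U Y : Type*} [PseudoMetricSpace U] [PseudoMetricSpace Y]
    (R : Set ((ℝ → U) × (ℝ → Y))) (γ : ℝ≥0 → ℝ≥0) (U₀ : Set U) : Prop :=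
  ∀ p ∈ R, convTo p.1 U₀ → aa p.2 ≤ extK γ (aa p.1)

def IncGainOn {U Y : Type*} [PseudoMetricSpace U] [PseudoMetricSpace Y]
    (R : Set ((ℝ → U) × (ℝ → Y))) (κ : ℝ≥0 → ℝ≥0) (U₀ : Set U) : Prop :=
  ∀ p₁ ∈ R, ∀ p₂ ∈ R, ∀ u₁ u₂ : U, u₁ ∈ U₀ → u₂ ∈ U₀ →
    Filter.Tendsto p₁.1 Filter.atTop (nhds u₁) → Filter.Tendsto p₂.1 Filter.atTop (nhds u₂) →
    Filter.limsup (fun t => edist (p₁.2 t) (p₂.2 t)) Filter.atTop ≤ ↑(κ (nndist u₁ u₂))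

def ZV {E : Type*} (X : Set E) (V : E → ℝ) : Set E := {x ∈ X | V x = 0}

def UDecrease {E 𝒰 : Type*} [NormedAddCommGroup E] [NormedSpace ℝ E] [PseudoMetricSpace 𝒰]
    (X₀ X : Set E) (f : E → 𝒰 → E) (Uset : Set 𝒰) (V : E → ℝ) : Prop :=
  (∀ x ∈ X, 0 ≤ V x) ∧ ContinuousOn V X ∧
  (∀ a b : ℝ, 0 ≤ a → a ≤ b → IsCompact {x ∈ X | a ≤ V x ∧ V x ≤ b}) ∧
  (∀ x ∈ X, V x ≠ 0 → ∃ (W : Set E) (Vt : E → ℝ), IsOpen W ∧ x ∈ W ∧ W ⊆ X₀ ∧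
    ContDiffOn ℝ 1 Vt W ∧ (∀ z ∈ W ∩ X, Vt z = V z) ∧
    ∀ u ∈ Uset, fderiv ℝ Vt x (f x u) < 0)

/-!
If `(ω, η)` lies in `R` and `(η, ω)` lies in `S`, then `(η, η)` is an input/output pair of the
cascade of `S` followed by `R`, whose Cauchy gain is `γ₁ ∘ γ₂`. So the amplitude `a` of `η`
satisfies `a ≤ γ₁ (γ₂ a)`. It is finite because the amplitude of `ω` is, and a finite positive `a`
would contradict `γ₁ (γ₂ a) < a`. Hence `a = 0`, and the gain of `S` gives amplitude `0` for `ω`.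
-/

section extK

variable {γ : ℝ≥0 → ℝ≥0}

@[simp]
lemma extK_top (γ : ℝ≥0 → ℝ≥0) : extK γ ⊤ = ⊤ := if_pos rfl

@[simp]
lemma extK_coe (γ : ℝ≥0 → ℝ≥0) (r : ℝ≥0) : extK γ r = γ r := by
  simp [extK]

lemma extK_zero (h₀ : γ 0 = 0) : extK γ 0 = 0 := by
  rw [← ENNReal.coe_zero, extK_coe, h₀]

lemma extK_lt_top {x : ℝ≥0∞} (hx : x < ⊤) : extK γ x < ⊤ := by
  lift x to ℝ≥0 using hx.ne
  rw [extK_coe]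
  exact ENNReal.coe_lt_top

lemma extK_comp_apply (γ₁ γ₂ : ℝ≥0 → ℝ≥0) (x : ℝ≥0∞) :
    extK (γ₁ ∘ γ₂) x = extK γ₁ (extK γ₂ x) := by
  cases x <;> simp

lemma extK_monotone (hγ : Monotone γ) : Monotone (extK γ) := by
  intro x y hxy
  cases y with
  | top => simp
  | coe s =>
    lift x to ℝ≥0 using (hxy.trans_lt ENNReal.coe_lt_top).ne
    simpa using hγ (ENNReal.coe_le_coe.mp hxy)

lemma extK_lt_self (hγ : ∀ r : ℝ≥0, 0 < r → γ r < r) {x : ℝ≥0∞} (hx₀ : 0 < x) (hx : x < ⊤) :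
    extK γ x < x := by
  lift x to ℝ≥0 using hx.ne
  simpa using hγ x (ENNReal.coe_pos.mp hx₀)

end extK

namespace CauchyGain

variable {U Y Z : Type*} [PseudoMetricSpace U] [PseudoMetricSpace Y] [PseudoMetricSpace Z]
  {R : Set ((ℝ → U) × (ℝ → Y))} {S : Set ((ℝ → Y) × (ℝ → Z))} {Q : Set ((ℝ → Y) × (ℝ → Y))}
  {γ γ₁ γ₂ : ℝ≥0 → ℝ≥0} {ω : ℝ → U} {η : ℝ → Y}

lemma aa_output_lt_top (hR : CauchyGain R γ) (hωη : (ω, η) ∈ R) (hω : aa ω < ⊤) : aa η < ⊤ :=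
  (hR (ω, η) hωη).trans_lt (extK_lt_top hω)

lemma aa_output_eq_zero (hR : CauchyGain R γ) (h₀ : γ 0 = 0) (hωη : (ω, η) ∈ R)
    (hω : aa ω = 0) : aa η = 0 := by
  simpa [hω, extK_zero h₀] using hR (ω, η) hωη

protected lemma cascade (hR : CauchyGain R γ₁) (hS : CauchyGain S γ₂) (hγ₂ : Monotone γ₂) :
    CauchyGain (cascade R S) (γ₂ ∘ γ₁) := by
  rintro ⟨ω, ζ⟩ ⟨η, hωη, hηζ⟩
  calc
    aa ζ ≤ extK γ₂ (aa η) := hS (η, ζ) hηζ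
    _ ≤ extK γ₂ (extK γ₁ (aa ω)) := extK_monotone hγ₂ (hR (ω, η) hωη)
    _ = extK (γ₂ ∘ γ₁) (aa ω) := (extK_comp_apply γ₂ γ₁ _).symm

lemma aa_eq_zero_of_diag_mem (hQ : CauchyGain Q γ) (hγ : ∀ r : ℝ≥0, 0 < r → γ r < r)
    (hηη : (η, η) ∈ Q) (hη : aa η < ⊤) : aa η = 0 := by
  by_contra hne
  exact (hQ (η, η) hηη).not_gt (extK_lt_self hγ (pos_iff_ne_zero.mpr hne) hη)

end CauchyGain

theorem stmt2_general {𝒰 𝒴 : Type*} [PseudoMetricSpace 𝒰] [PseudoMetricSpace 𝒴]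
    {R : Set ((ℝ → 𝒰) × (ℝ → 𝒴))} {S : Set ((ℝ → 𝒴) × (ℝ → 𝒰))}
    {γ₁ γ₂ : ℝ≥0 → ℝ≥0} (hγ₁ : Monotone γ₁) (hγ₂ : γ₂ 0 = 0)
    (hR : CauchyGain R γ₁) (hS : CauchyGain S γ₂)
    (hsg : ∀ r : ℝ≥0, 0 < r → γ₁ (γ₂ r) < r)
    {ω : ℝ → 𝒰} {η : ℝ → 𝒴} (hωη : (ω, η) ∈ R) (hηω : (η, ω) ∈ S) (hω : aa ω < ⊤) :
    aa ω = 0 ∧ aa η = 0 := by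
  have hloop : CauchyGain (cascade S R) (γ₁ ∘ γ₂) := hS.cascade hR hγ₁
  have hηη : (η, η) ∈ cascade S R := ⟨ω, hηω, hωη⟩
  have hη : aa η = 0 := hloop.aa_eq_zero_of_diag_mem hsg hηη (hR.aa_output_lt_top hωη hω)
  exact ⟨hS.aa_output_eq_zero hγ₂ hηω hη, hη⟩

/-- Small gain lemma for asymptotic amplitude. -/
theorem stmt2 {𝒰 𝒴 : Type*} [MetricSpace 𝒰] [CompleteSpace 𝒰] [MetricSpace 𝒴] [CompleteSpace 𝒴]
    (R : Set ((ℝ → 𝒰) × (ℝ → 𝒴))) (S : Set ((ℝ → 𝒴) × (ℝ → 𝒰)))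
    (γ₁ γ₂ : ℝ≥0 → ℝ≥0) (hγ₁ : KInfty γ₁) (hγ₂ : KInfty γ₂)
    (hR : CauchyGain R γ₁) (hS : CauchyGain S γ₂)
    (hsg : ∀ r : ℝ≥0, 0 < r → γ₁ (γ₂ r) < r) :
    ∀ ω : ℝ → 𝒰, ∀ η : ℝ → 𝒴, (ω, η) ∈ R → (η, ω) ∈ S → aa ω < ⊤ →
      aa ω = 0 ∧ aa η = 0 := by
  intro ω η hωη hηω hω
  exact stmt2_general hγ₁.2.1.monotone hγ₂.2.2.1 hR hS hsg hωη hηω hω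
end

section
/- Let 𝒰 be a metric space. For every ω : [0,∞) → 𝒰, the diameter of the omega-limit set satisfies |Ω⁺[ω]| ≤ ‖ω‖_aa. If moreover ω is precompact, then equality holds: ‖ω‖_aa = |Ω⁺[ω]|. -/
open Filter Topology MeasureTheory
open scoped ENNReal NNReal

/-!
In terms of cluster points, the claim compares the asymptotic amplitude, a limsup of distances along
`atTop ×ˢ atTop`, with distances between cluster points of `ω` at infinity. A pair of cluster points
is a cluster point of the pairs `(ω t, ω s)`, so by continuity its distance is a cluster value of
`edist (ω t) (ω s)`, hence at most the limsup. Conversely the limsup is itself a cluster value, and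
compactness lifts it from the distances to a pair of cluster points.
-/

section ClusterPoints

variable {α β X Y M : Type*}

theorem exists_mapClusterPt_apply_eq [TopologicalSpace X] [TopologicalSpace Y] [T2Space Y]
    {l : Filter α} {h : α → X} {g : X → Y} {K : Set X} {y : Y} (hK : IsCompact K)
    (hhK : ∀ᶠ a in l, h a ∈ K) (hg : Continuous g) (hy : MapClusterPt y l (g ∘ h)) :
    ∃ x, MapClusterPt x l h ∧ g x = y := by
  obtain ⟨l', hl'_neBot, hl', hlim⟩ : ∃ l' : Filter α, l'.NeBot ∧ l' ≤ l ∧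
      Tendsto (g ∘ h) l' (𝓝 y) :=
    ⟨comap (g ∘ h) (𝓝 y) ⊓ l, neBot_inf_comap_iff_map'.2 hy, inf_le_right,
      tendsto_comap.mono_left inf_le_left⟩
  obtain ⟨x, -, hx⟩ := hK.exists_mapClusterPt (tendsto_principal.2 (hl' hhK))
  have hgx : MapClusterPt (g x) l' (g ∘ h) := hx.continuousAt_comp hg.continuousAt
  exact ⟨x, hx.mono hl', eq_of_nhds_neBot (hgx.clusterPt.neBot.mono (inf_le_inf_left _ hlim))⟩

variable [PseudoEMetricSpace M] {l : Filter α} {l' : Filter β} {f : α → M} {g : β → M}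

theorem edist_le_limsup_edist_of_mapClusterPt {u v : M} (hu : MapClusterPt u l f)
    (hv : MapClusterPt v l' g) :
    edist u v ≤ limsup (fun p : α × β => edist (f p.1) (g p.2)) (l ×ˢ l') :=
  ((hu.prodMap hv).continuousAt_comp continuous_edist.continuousAt).le_limsup

theorem exists_mapClusterPt_edist_eq_limsup_edist [NeBot l] [NeBot l'] {K K' : Set M}
    (hK : IsCompact K) (hK' : IsCompact K') (hf : ∀ᶠ a in l, f a ∈ K) (hg : ∀ᶠ b in l', g b ∈ K') :
    ∃ u v, MapClusterPt u l f ∧ MapClusterPt v l' g ∧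
      edist u v = limsup (fun p : α × β => edist (f p.1) (g p.2)) (l ×ˢ l') := by
  obtain ⟨⟨u, v⟩, huv, hlimsup⟩ := exists_mapClusterPt_apply_eq (h := Prod.map f g)
    (hK.prod hK') (hf.prod_mk hg) continuous_edist MapClusterPt.limsup
  exact ⟨u, v, (huv.continuousAt_comp continuousAt_fst).of_comp tendsto_fst,
    (huv.continuousAt_comp continuousAt_snd).of_comp tendsto_snd, hlimsup⟩

end ClusterPoints

section OmegaLimit

variable {M : Type*} [PseudoMetricSpace M] {ω : ℝ → M}

theorem mem_omegaLim_iff_mapClusterPt {u : M} : u ∈ omegaLim ω ↔ MapClusterPt u atTop ω :=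
  ⟨fun ⟨_, ht, hu⟩ => hu.mapClusterPt.of_comp ht,
    fun hu => hu.exists_seq_tendsto.imp fun _ => And.symm⟩

theorem ediam_omegaLim_le_aa : Metric.ediam (omegaLim ω) ≤ aa ω :=
  Metric.ediam_le fun _ hu _ hv => edist_le_limsup_edist_of_mapClusterPt
    (mem_omegaLim_iff_mapClusterPt.1 hu) (mem_omegaLim_iff_mapClusterPt.1 hv)

theorem exists_mem_omegaLim_edist_eq_aa {K : Set M} (hK : IsCompact K)
    (hωK : ∀ᶠ t in atTop, ω t ∈ K) :
    ∃ u ∈ omegaLim ω, ∃ v ∈ omegaLim ω, edist u v = aa ω := by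
  obtain ⟨u, v, hu, hv, huv⟩ := exists_mapClusterPt_edist_eq_limsup_edist hK hK hωK hωK
  exact ⟨u, mem_omegaLim_iff_mapClusterPt.2 hu, v, mem_omegaLim_iff_mapClusterPt.2 hv, huv⟩

theorem Precomp.exists_isCompact_eventually_mem (hω : Precomp ω) :
    ∃ K, IsCompact K ∧ ∀ᶠ t in atTop, ω t ∈ K :=
  hω.imp fun _ hK => hK.imp_right fun hωK => (eventually_ge_atTop 0).mono hωK

end OmegaLimit

theorem stmt11_general {M : Type*} [PseudoMetricSpace M] (ω : ℝ → M) :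
    Metric.ediam (omegaLim ω) ≤ aa ω ∧
      ((∃ K, IsCompact K ∧ ∀ᶠ t in atTop, ω t ∈ K) → aa ω = Metric.ediam (omegaLim ω)) := by
  refine ⟨ediam_omegaLim_le_aa, fun ⟨K, hK, hωK⟩ => le_antisymm ?_ ediam_omegaLim_le_aa⟩
  obtain ⟨u, hu, v, hv, huv⟩ := exists_mem_omegaLim_edist_eq_aa hK hωK
  exact huv ▸ Metric.edist_le_ediam_of_mem hu hv

/-- `|Ω⁺[ω]| ≤ ‖ω‖_aa` always, with equality when ω is precompact. -/
theorem stmt11 {𝒰 : Type*} [MetricSpace 𝒰] (ω : ℝ → 𝒰) :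
    EMetric.diam (omegaLim ω) ≤ aa ω ∧ (Precomp ω → aa ω = EMetric.diam (omegaLim ω)) :=
  (stmt11_general ω).imp_right fun h hω => h hω.exists_isCompact_eventually_mem
end

section
/- Let 𝒳 ⊆ ℝⁿ, V : 𝒳 → [0,∞) continuous, and ξ : [0,∞) → 𝒳 such that V∘ξ is locally Lipschitz. Let a > 0 and T₀ ≥ 0, and suppose that for almost every t ≥ T₀ at which V(ξ(t)) ≥ a, the derivative (d/dt)V(ξ(t)) exists and is strictly negative. Define T₁ := inf{t ≥ T₀ : V(ξ(t)) ≤ a} (with T₁ = +∞ if no such t exists). Then V(ξ(t)) ≤ V(ξ(T₀)) for all t ∈ [T₀, T₁), and V(ξ(t)) ≤ a for all t ≥ T₁. -/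
/-!
A crossing argument: if `c` is the last time in `[T₁, t]` with `f c ≤ a`, then `f > a` on `(c, t]`,
so `f' ≤ 0` almost everywhere there and the fundamental theorem of calculus gives `f t ≤ f c ≤ a`.
The same argument applies at every level above `a`; at the level `f T₀` it bounds `f` before `T₁`.
-/

open Filter Topology MeasureTheory
open scoped ENNReal NNReal

theorem exists_mem_Icc_le_forall_Ioc_lt {α β : Type*} [LinearOrder α] [TopologicalSpace α]
    [OrderClosedTopology α] [CompactIccSpace α] [LinearOrder β] [TopologicalSpace β]
    [ClosedIicTopology β] {f : α → β} {a : β} {c d : α} (hcd : c ≤ d)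
    (hf : ContinuousOn f (Set.Icc c d)) (hc : f c ≤ a) :
    ∃ x ∈ Set.Icc c d, f x ≤ a ∧ ∀ u ∈ Set.Ioc x d, a < f u := by
  have hcompact : IsCompact (Set.Icc c d ∩ f ⁻¹' Set.Iic a) :=
    isCompact_Icc.of_isClosed_subset (hf.preimage_isClosed_of_isClosed isClosed_Icc isClosed_Iic)
      Set.inter_subset_left
  obtain ⟨x, ⟨hx, hfx⟩, hlast⟩ := hcompact.exists_isGreatest ⟨c, ⟨le_rfl, hcd⟩, hc⟩
  refine ⟨x, hx, hfx, fun u hu => ?_⟩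
  by_contra! hfu
  exact hu.1.not_ge (hlast ⟨⟨hx.1.trans hu.1.le, hu.2⟩, hfu⟩)

theorem locallyLipschitzOn_of_forall_exists_lipschitzOnWith_Icc {E : Type*} [PseudoEMetricSpace E]
    {f : ℝ → E} {s : Set ℝ}
    (hf : ∀ t ∈ s, ∃ ε > (0 : ℝ), ∃ K : ℝ≥0, LipschitzOnWith K f (Set.Icc (t - ε) (t + ε))) :
    LocallyLipschitzOn s f := by
  intro t ht
  obtain ⟨ε, hε, K, hK⟩ := hf t ht
  exact ⟨K, _, mem_nhdsWithin_of_mem_nhds (Icc_mem_nhds (by linarith) (by linarith)), hK⟩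

theorem absolutelyContinuousOnInterval_of_locallyLipschitzOn {E : Type*} [PseudoMetricSpace E]
    {f : ℝ → E} {c d : ℝ} (hf : LocallyLipschitzOn (Set.uIcc c d) f) :
    AbsolutelyContinuousOnInterval f c d :=
  let ⟨_, hK⟩ := hf.exists_lipschitzOnWith_of_compact isCompact_uIcc
  hK.absolutelyContinuousOnInterval

theorem continuousOn_Ici_of_absolutelyContinuousOnInterval {E : Type*} [SeminormedAddCommGroup E]
    {f : ℝ → E} {c : ℝ} (hf : ∀ d, c ≤ d → AbsolutelyContinuousOnInterval f c d) :
    ContinuousOn f (Set.Ici c) := by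
  refine continuousOn_of_locally_continuousOn fun t ht =>
    ⟨Set.Iio (t + 1), isOpen_Iio, lt_add_one t, ?_⟩
  have hle : c ≤ t + 1 := (Set.mem_Ici.1 ht).trans (lt_add_one t).le
  refine (hf (t + 1) hle).continuousOn.mono fun u hu => ?_
  exact Set.mem_uIcc_of_le hu.1 (Set.mem_Iio.1 hu.2).le

section AbsolutelyContinuous

variable {f : ℝ → ℝ} {a c d : ℝ}

theorem le_of_ae_deriv_nonpos (hcd : c ≤ d) (hf : AbsolutelyContinuousOnInterval f c d)
    (hderiv : ∀ᵐ t, t ∈ Set.Ioc c d → deriv f t ≤ 0) : f d ≤ f c := by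
  have hint : ∫ t in c..d, deriv f t ≤ 0 := by
    rw [intervalIntegral.integral_of_le hcd]
    exact setIntegral_nonpos_of_ae_restrict ((ae_restrict_iff' measurableSet_Ioc).2 hderiv)
  exact sub_nonpos.1 (hf.integral_deriv_eq_sub ▸ hint)

theorem le_of_ae_deriv_nonpos_of_lt (hcd : c ≤ d) (hf : AbsolutelyContinuousOnInterval f c d)
    (hderiv : ∀ᵐ t, t ∈ Set.Ioc c d → a < f t → deriv f t ≤ 0) (hc : f c ≤ a) : f d ≤ a := by
  obtain ⟨x, hx, hfx, habove⟩ :=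
    exists_mem_Icc_le_forall_Ioc_lt hcd (Set.uIcc_of_le hcd ▸ hf.continuousOn) hc
  have hf' : AbsolutelyContinuousOnInterval f x d :=
    hf.mono (Set.uIcc_subset_uIcc_right (Set.Icc_subset_uIcc hx))
  refine (le_of_ae_deriv_nonpos hx.2 hf' ?_).trans hfx
  filter_upwards [hderiv] with t ht htx
  exact ht ⟨hx.1.trans_lt htx.1, htx.2⟩ (habove t htx)

end AbsolutelyContinuous

theorem stmt13_general {f : ℝ → ℝ} {a T₀ : ℝ}
    (hf : ∀ d, T₀ ≤ d → AbsolutelyContinuousOnInterval f T₀ d)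
    (hderiv : ∀ᵐ t, T₀ ≤ t → a < f t → deriv f t ≤ 0) :
    (∀ t, T₀ ≤ t → (∀ s, T₀ ≤ s → f s ≤ a → t < s) → f t ≤ f T₀) ∧
    ({s | T₀ ≤ s ∧ f s ≤ a}.Nonempty → ∀ t, sInf {s | T₀ ≤ s ∧ f s ≤ a} ≤ t → f t ≤ a) := by
  have sublevel_invariant {b c t : ℝ} (hb : a ≤ b) (hc : T₀ ≤ c) (hct : c ≤ t) (hfc : f c ≤ b) :
      f t ≤ b := by
    have hsub : Set.uIcc c t ⊆ Set.uIcc T₀ t :=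
      Set.uIcc_subset_uIcc_right (Set.mem_uIcc_of_le hc hct)
    refine le_of_ae_deriv_nonpos_of_lt hct ((hf t (hc.trans hct)).mono hsub) ?_ hfc
    filter_upwards [hderiv] with u hu huct hfu
    exact hu (hc.trans huct.1.le) (hb.trans_lt hfu)
  refine ⟨fun t ht hbefore => ?_, fun hne t ht => ?_⟩
  · have hstart : a < f T₀ := lt_of_not_ge fun hle => (hbefore T₀ le_rfl hle).not_ge ht
    exact sublevel_invariant hstart.le le_rfl ht le_rfl
  · have hclosed : IsClosed {s | T₀ ≤ s ∧ f s ≤ a} :=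
      (continuousOn_Ici_of_absolutelyContinuousOnInterval hf).preimage_isClosed_of_isClosed
        isClosed_Ici isClosed_Iic
    obtain ⟨hT₁, hfT₁⟩ := hclosed.csInf_mem hne ⟨T₀, fun _ hs => hs.1⟩
    exact sublevel_invariant le_rfl hT₁ ht hfT₁

/-- the monotonicity claim along a trajectory whose Lyapunov value
decreases whenever it is at least `a`. Here `T₁ = sInf {t ≥ T₀ | V(ξ t) ≤ a}`;
the first conjunct covers `t ∈ [T₀, T₁)` (expressed as: `t` is below every element
of that set), the second covers `t ≥ T₁` when the set is nonempty (when it is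
empty, `T₁ = +∞` and there is nothing to prove). -/
theorem stmt13 {n : ℕ} (X : Set (Fin n → ℝ)) (V : (Fin n → ℝ) → ℝ)
    (hV0 : ∀ x ∈ X, 0 ≤ V x) (hVc : ContinuousOn V X)
    (ξ : ℝ → (Fin n → ℝ)) (hξX : ∀ t : ℝ, 0 ≤ t → ξ t ∈ X)
    (hLip : ∀ t : ℝ, 0 ≤ t → ∃ ε > (0:ℝ), ∃ K : ℝ≥0,
      LipschitzOnWith K (fun s => V (ξ s)) (Set.Icc (t - ε) (t + ε)))
    (a : ℝ) (ha : 0 < a) (T₀ : ℝ) (hT₀ : 0 ≤ T₀)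
    (hdec : ∀ᵐ t : ℝ ∂volume, T₀ ≤ t → a ≤ V (ξ t) →
      ∃ d : ℝ, d < 0 ∧ HasDerivAt (fun s => V (ξ s)) d t) :
    (∀ t : ℝ, T₀ ≤ t → (∀ s : ℝ, T₀ ≤ s → V (ξ s) ≤ a → t < s) → V (ξ t) ≤ V (ξ T₀)) ∧
    ({s : ℝ | T₀ ≤ s ∧ V (ξ s) ≤ a}.Nonempty →
      ∀ t : ℝ, sInf {s : ℝ | T₀ ≤ s ∧ V (ξ s) ≤ a} ≤ t → V (ξ t) ≤ a) :=
  stmt13_general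
    (fun _ hd => absolutelyContinuousOnInterval_of_locallyLipschitzOn <|
      locallyLipschitzOn_of_forall_exists_lipschitzOnWith_Icc fun t ht =>
        hLip t (hT₀.trans (Set.uIcc_of_le hd ▸ ht).1))
    (hdec.mono fun _ h ht hat =>
      let ⟨_, hneg, hderiv⟩ := h ht hat.le
      hderiv.deriv.trans_le hneg.le)
end

section
/- Let 𝒳₀ ⊆ ℝⁿ be open, 𝒳 ⊆ 𝒳₀, 𝒰 and 𝒴 complete metric spaces, f : 𝒳₀ × 𝒰 → ℝⁿ continuous, and h : 𝒳 → 𝒴 continuous. Let γ ∈ 𝒦∞ and suppose that for each compact U ⊆ 𝒰 there exists a U-decrease function V_U with |h(Z_{V_U})| ≤ γ(|U|). Let ω : [0,∞) → 𝒰 be Lebesgue-measurable and precompact, ξ : [0,∞) → 𝒳 locally Lipschitz with ξ'(t) = f(ξ(t), ω(t)) for almost every t ≥ 0, and η := h∘ξ. Then ξ and η are precompact, and for every compact U ⊆ 𝒰 with ω → U, one has ξ → Z_{V_U} and η → h(Z_{V_U}). -/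
/-!
Along a trajectory, `V_U ∘ ξ` is locally Lipschitz with almost everywhere negative derivative as
long as `V_U (ξ t) ≠ 0` and `ω t ∈ U`. By compactness of the bands `{a ≤ V_U ≤ b}`, `a > 0`, and
of `U`, the derivative is at most some `-c < 0` on the whole band, and still so for inputs in a
neighbourhood of `U`. Taking for `U` a compact set containing all values of `ω` shows that `ξ` stays
in a compact sublevel set of `V_U`. For `ω → U`, this bounds `V_U ∘ ξ`, so the uniform decrease
eventually drives it below every `a > 0`, and a trajectory in a compact subset of `X` with
`V_U (ξ t) → 0` approaches `Z_{V_U}`.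
-/

open Filter Topology MeasureTheory
open scoped ENNReal NNReal

theorem le_sub_mul_of_ae_deriv_le {g : ℝ → ℝ} {s t c : ℝ} (hst : s ≤ t)
    (hg : AbsolutelyContinuousOnInterval g s t)
    (hd : ∀ᵐ τ : ℝ, τ ∈ Set.Ioo s t → deriv g τ ≤ -c) :
    g t ≤ g s - c * (t - s) := by
  have hle : ∫ τ in s..t, deriv g τ ≤ ∫ _ in s..t, -c := by
    simp only [intervalIntegral.integral_of_le hst, integral_Ioc_eq_integral_Ioo]
    exact setIntegral_mono_ae_restrict
      (hg.intervalIntegrable_deriv.1.mono_set Set.Ioo_subset_Ioc_self) (integrable_const _)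
      ((ae_restrict_iff' measurableSet_Ioo).2 hd)
  rw [hg.integral_deriv_eq_sub, intervalIntegral.integral_const, smul_eq_mul] at hle
  linarith

theorem exists_mem_Icc_eq_and_forall_le {α β : Type*} [ConditionallyCompleteLinearOrder α]
    [TopologicalSpace α] [OrderTopology α] [DenselyOrdered α] [LinearOrder β]
    [TopologicalSpace β] [OrderClosedTopology β] {g : α → β} {s t : α} {a : β} (hst : s ≤ t)
    (hg : ContinuousOn g (Set.Icc s t)) (hs : g s ≤ a) (ht : a < g t) :
    ∃ r ∈ Set.Icc s t, g r = a ∧ ∀ τ ∈ Set.Icc r t, a ≤ g τ := by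
  have hcompact : IsCompact (Set.Icc s t ∩ g ⁻¹' Set.Iic a) :=
    isCompact_Icc.of_isClosed_subset (hg.preimage_isClosed_of_isClosed isClosed_Icc isClosed_Iic)
      Set.inter_subset_left
  obtain ⟨r, ⟨hr, hra : g r ≤ a⟩, hmax⟩ :=
    hcompact.exists_isGreatest ⟨s, Set.left_mem_Icc.2 hst, hs⟩
  have hrt : r ≠ t := by
    rintro rfl
    exact hra.not_gt ht
  have habove : ∀ τ ∈ Set.Ioc r t, a ≤ g τ := fun τ hτ => by
    by_contra! hlt
    exact hτ.1.not_ge (hmax ⟨⟨hr.1.trans hτ.1.le, hτ.2⟩, hlt.le⟩)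
  have hclosure : ∀ τ ∈ Set.Icc r t, a ≤ g τ := by
    rw [← closure_Ioc hrt]
    refine le_on_closure habove continuousOn_const (hg.mono ?_)
    rw [closure_Ioc hrt]
    exact Set.Icc_subset_Icc_left hr.1
  exact ⟨r, hr, hra.antisymm (hclosure r (Set.left_mem_Icc.2 hr.2)), hclosure⟩

theorem locallyLipschitzOn_comp {α β γ : Type*} [PseudoEMetricSpace α] [PseudoEMetricSpace β]
    [PseudoEMetricSpace γ] {g : β → γ} {f : α → β} {s : Set α} {t : Set β}
    (hg : LocallyLipschitzOn t g) (hf : LocallyLipschitzOn s f) (hst : Set.MapsTo f s t) :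
    LocallyLipschitzOn s (g ∘ f) := by
  intro x hx
  obtain ⟨Kg, N, hN, hgN⟩ := hg (hst hx)
  obtain ⟨Kf, M, hM, hfM⟩ := hf hx
  have hpre : f ⁻¹' N ∈ 𝓝[s] x := (hf.continuousOn x hx).tendsto_nhdsWithin hst hN
  exact ⟨Kg * Kf, M ∩ f ⁻¹' N, inter_mem hM hpre,
    hgN.comp (hfM.mono Set.inter_subset_left) fun _ hσ => hσ.2⟩

theorem eventually_mem_of_tendsto_of_isCompact {ι E F M : Type*} [TopologicalSpace E] [T2Space E]
    [TopologicalSpace F] [T2Space F] [TopologicalSpace M] {l : Filter ι} {ξ : ι → E} {V : E → F}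
    {g : E → M} {y : F} {C : Set E} {W : Set M} (hC : IsCompact C) (hV : ContinuousOn V C)
    (hg : ContinuousOn g C) (hξ : ∀ᶠ t in l, ξ t ∈ C) (hlim : Tendsto (V ∘ ξ) l (𝓝 y))
    (hW : IsOpen W) (hCW : ∀ x ∈ C, V x = y → g x ∈ W) :
    ∀ᶠ t in l, g (ξ t) ∈ W := by
  have hfar : IsCompact (C ∩ g ⁻¹' Wᶜ) :=
    hC.of_isClosed_subset (hg.preimage_isClosed_of_isClosed hC.isClosed hW.isClosed_compl)
      Set.inter_subset_left
  have hy : y ∉ V '' (C ∩ g ⁻¹' Wᶜ) := by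
    rintro ⟨x, ⟨hxC, hxW⟩, hVx⟩
    exact hxW (hCW x hxC hVx)
  have himage : IsClosed (V '' (C ∩ g ⁻¹' Wᶜ)) :=
    (hfar.image_of_continuousOn (hV.mono Set.inter_subset_left)).isClosed
  filter_upwards [hξ, hlim (himage.compl_mem_nhds hy)] with t htC htV
  by_contra htW
  exact htV ⟨ξ t, ⟨htC, htW⟩, rfl⟩

theorem convTo_iff_eventually_mem_thickening {M : Type*} [PseudoMetricSpace M] {ω : ℝ → M}
    {U : Set M} : convTo ω U ↔ ∀ ε > 0, ∀ᶠ t in atTop, ω t ∈ Metric.thickening ε U := by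
  constructor
  · intro hω ε hε
    obtain ⟨T, -, hT⟩ := hω (ε / 2) (half_pos hε)
    filter_upwards [eventually_ge_atTop T] with t ht
    obtain ⟨u, hu, hdist⟩ := hT t ht
    exact Metric.mem_thickening_iff.2 ⟨u, hu, hdist.trans_lt (half_lt_self hε)⟩
  · intro hω ε hε
    obtain ⟨T, hT⟩ := eventually_atTop.1 (hω ε hε)
    refine ⟨max T 0, le_max_right T 0, fun t ht => ?_⟩
    obtain ⟨u, hu, hdist⟩ := Metric.mem_thickening_iff.1 (hT t ((le_max_left T 0).trans ht))
    exact ⟨u, hu, hdist.le⟩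

theorem convTo.eventually_mem {M : Type*} [PseudoMetricSpace M] {ω : ℝ → M} {U O : Set M}
    (hω : convTo ω U) (hU : IsCompact U) (hO : O ∈ 𝓝ˢ U) : ∀ᶠ t in atTop, ω t ∈ O := by
  obtain ⟨δ, hδ, hδO⟩ := (Metric.hasBasis_nhdsSet_thickening hU).mem_iff.1 hO
  exact (convTo_iff_eventually_mem_thickening.1 hω δ hδ).mono fun t ht => hδO ht

section Trajectory

variable {E 𝒰 : Type*} [NormedAddCommGroup E] [NormedSpace ℝ E]
  {X : Set E} {f : E → 𝒰 → E} {V : E → ℝ} {O : Set 𝒰} {ω : ℝ → 𝒰} {ξ : ℝ → E} {a b c s t : ℝ}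

/-- `ξ` is a locally Lipschitz solution in `X` of `ξ' = f (ξ, ω)` on `[0, ∞)`; the values of `ξ` and
`ω` at negative times are irrelevant. -/
structure IsTrajectory (X : Set E) (f : E → 𝒰 → E) (ω : ℝ → 𝒰) (ξ : ℝ → E) : Prop where
  locallyLipschitzOn : LocallyLipschitzOn (Set.Ici 0) ξ
  mapsTo : Set.MapsTo ξ (Set.Ici 0) X
  ae_hasDerivAt : ∀ᵐ t : ℝ, 0 ≤ t → HasDerivAt ξ (f (ξ t) (ω t)) t

/-- `V` decreases at `x` at rate at least `c` along `f x u` for every input `u ∈ O`. As `V` matters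
only on `X`, the derivative is that of some `C¹` extension of the germ of `V` at `x` within `X`. -/
def DecreasesAt (X : Set E) (f : E → 𝒰 → E) (V : E → ℝ) (O : Set 𝒰) (c : ℝ) (x : E) : Prop :=
  ∃ Vt : E → ℝ, ContDiffAt ℝ 1 Vt x ∧ Vt =ᶠ[𝓝[X] x] V ∧ ∀ u ∈ O, fderiv ℝ Vt x (f x u) ≤ -c

theorem DecreasesAt.mono {O' : Set 𝒰} {c' : ℝ} {x : E} (hd : DecreasesAt X f V O c x)
    (hO : O' ⊆ O) (hc : c' ≤ c) : DecreasesAt X f V O' c' x := by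
  obtain ⟨Vt, hVt, heq, hle⟩ := hd
  exact ⟨Vt, hVt, heq, fun u hu => (hle u (hO hu)).trans (neg_le_neg hc)⟩

theorem locallyLipschitzOn_of_decreasesAt {S : Set E} (hS : S ⊆ X)
    (hd : ∀ x ∈ S, DecreasesAt X f V O c x) : LocallyLipschitzOn S V := by
  intro x hx
  obtain ⟨Vt, hVt, heq, -⟩ := hd x hx
  obtain ⟨K, N, hN, hK⟩ := hVt.exists_lipschitzOnWith
  refine ⟨K, N ∩ {z | Vt z = V z}, inter_mem (mem_nhdsWithin_of_mem_nhds hN)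
    (nhdsWithin_mono x hS heq), ?_⟩
  rintro z ⟨hzN, hz : Vt z = V z⟩ z' ⟨hzN', hz' : Vt z' = V z'⟩
  rw [← hz, ← hz']
  exact hK hzN hzN'

theorem DecreasesAt.deriv_comp_le {τ : ℝ} {u : 𝒰} (hd : DecreasesAt X f V O c (ξ τ)) (hu : u ∈ O)
    (hξ : HasDerivAt ξ (f (ξ τ) u) τ) (hX : ∀ᶠ σ in 𝓝 τ, ξ σ ∈ X) :
    deriv (V ∘ ξ) τ ≤ -c := by
  obtain ⟨Vt, hVt, heq, hle⟩ := hd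
  have hder : HasDerivAt (Vt ∘ ξ) (fderiv ℝ Vt (ξ τ) (f (ξ τ) u)) τ :=
    (hVt.differentiableAt one_ne_zero).hasFDerivAt.comp_hasDerivAt τ hξ
  have hξX : Tendsto ξ (𝓝 τ) (𝓝[X] ξ τ) := tendsto_nhdsWithin_iff.2 ⟨hξ.continuousAt, hX⟩
  have hcomp : Vt ∘ ξ =ᶠ[𝓝 τ] V ∘ ξ := hξX.eventually heq
  rw [(hder.congr_of_eventuallyEq hcomp.symm).deriv]
  exact hle u hu

namespace IsTrajectory

theorem continuousOn_comp (hξ : IsTrajectory X f ω ξ) (hV : ContinuousOn V X) :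
    ContinuousOn (V ∘ ξ) (Set.Ici 0) :=
  hV.comp hξ.locallyLipschitzOn.continuousOn hξ.mapsTo

theorem le_sub_mul_of_decreasesAt (hξ : IsTrajectory X f ω ξ) (hs : 0 ≤ s) (hst : s ≤ t)
    (hd : ∀ τ ∈ Set.Icc s t, DecreasesAt X f V O c (ξ τ)) (hω : ∀ τ ∈ Set.Icc s t, ω τ ∈ O) :
    V (ξ t) ≤ V (ξ s) - c * (t - s) := by
  have hsub : Set.Icc s t ⊆ Set.Ici 0 := fun τ hτ => hs.trans hτ.1
  have hVlip : LocallyLipschitzOn (ξ '' Set.Icc s t) V :=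
    locallyLipschitzOn_of_decreasesAt (hξ.mapsTo.mono_left hsub).image_subset
      (Set.forall_mem_image.2 hd)
  have hlip : LocallyLipschitzOn (Set.Icc s t) (V ∘ ξ) :=
    locallyLipschitzOn_comp hVlip (hξ.locallyLipschitzOn.mono hsub) (Set.mapsTo_image ξ _)
  obtain ⟨K, hK⟩ := hlip.exists_lipschitzOnWith_of_compact isCompact_Icc
  rw [← Set.uIcc_of_le hst] at hK
  refine le_sub_mul_of_ae_deriv_le (g := V ∘ ξ) hst hK.absolutelyContinuousOnInterval ?_
  filter_upwards [hξ.ae_hasDerivAt] with τ hode hτ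
  have hτ0 : 0 < τ := hs.trans_lt hτ.1
  have hτst : τ ∈ Set.Icc s t := Set.Ioo_subset_Icc_self hτ
  have hX : ∀ᶠ σ in 𝓝 τ, ξ σ ∈ X := mem_of_superset (Ici_mem_nhds hτ0) fun σ hσ => hξ.mapsTo hσ
  exact (hd τ hτst).deriv_comp_le (hω τ hτst) (hode hτ0.le) hX

theorem le_of_le_of_decreasesAt (hξ : IsTrajectory X f ω ξ) (hV : ContinuousOn V X) (hc : 0 ≤ c)
    (hd : ∀ x ∈ X, V x ∈ Set.Icc a b → DecreasesAt X f V O c x) (hs : 0 ≤ s) (hst : s ≤ t)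
    (hω : ∀ τ ∈ Set.Icc s t, ω τ ∈ O) (hb : ∀ τ ∈ Set.Icc s t, V (ξ τ) ≤ b)
    (hsa : V (ξ s) ≤ a) : V (ξ t) ≤ a := by
  by_contra! hta
  have hsub : Set.Icc s t ⊆ Set.Ici 0 := fun τ hτ => hs.trans hτ.1
  obtain ⟨r, hr, hra : V (ξ r) = a, habove⟩ :=
    exists_mem_Icc_eq_and_forall_le hst ((hξ.continuousOn_comp hV).mono hsub) hsa hta
  have hrt : Set.Icc r t ⊆ Set.Icc s t := Set.Icc_subset_Icc_left hr.1
  have hdecay : V (ξ t) ≤ V (ξ r) - c * (t - r) :=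
    hξ.le_sub_mul_of_decreasesAt (hs.trans hr.1) hr.2
      (fun τ hτ => hd (ξ τ) (hξ.mapsTo (hsub (hrt hτ))) ⟨habove τ hτ, hb τ (hrt hτ)⟩)
      (fun τ hτ => hω τ (hrt hτ))
  have hdrop : 0 ≤ c * (t - r) := mul_nonneg hc (sub_nonneg.2 hr.2)
  linarith

theorem exists_ge_le_of_decreasesAt (hξ : IsTrajectory X f ω ξ) (hc : 0 < c)
    (hd : ∀ x ∈ X, V x ∈ Set.Icc a b → DecreasesAt X f V O c x) (hs : 0 ≤ s)
    (hω : ∀ τ ≥ s, ω τ ∈ O) (hb : ∀ τ ≥ s, V (ξ τ) ≤ b) : ∃ t ≥ s, V (ξ t) ≤ a := by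
  by_contra! habove
  have hab : a < b := (habove s le_rfl).trans_le (hb s le_rfl)
  have hst : s ≤ s + (b - a) / c :=
    le_add_of_nonneg_right (div_nonneg (sub_nonneg.2 hab.le) hc.le)
  have hdecay := hξ.le_sub_mul_of_decreasesAt hs hst
    (fun τ hτ => hd (ξ τ) (hξ.mapsTo (hs.trans hτ.1)) ⟨(habove τ hτ.1).le, hb τ hτ.1⟩)
    (fun τ hτ => hω τ hτ.1)
  rw [add_sub_cancel_left, mul_div_cancel₀ _ hc.ne'] at hdecay
  linarith [habove _ hst, hb s le_rfl]

end IsTrajectory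

end Trajectory

namespace UDecrease

variable {E 𝒰 : Type*} [NormedAddCommGroup E] [NormedSpace ℝ E] [PseudoMetricSpace 𝒰]
  {X₀ X : Set E} {f : E → 𝒰 → E} {U : Set 𝒰} {V : E → ℝ} {ω : ℝ → 𝒰} {ξ : ℝ → E}

theorem isCompact_sublevel (hV : UDecrease X₀ X f U V) {b : ℝ} (hb : 0 ≤ b) :
    IsCompact {x ∈ X | V x ≤ b} := by
  obtain ⟨hnonneg, -, hproper, -⟩ := hV
  convert hproper 0 b le_rfl hb using 1
  ext x
  exact ⟨fun hx => ⟨hx.1, hnonneg x hx.1, hx.2⟩, fun hx => ⟨hx.1, hx.2.2⟩⟩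

theorem exists_eventually_decreasesAt (hV : UDecrease X₀ X f U V) (hU : IsCompact U)
    (hf : ContinuousOn (fun p : E × 𝒰 => f p.1 p.2) (X₀ ×ˢ Set.univ)) {x : E} (hx : x ∈ X)
    (hVx : V x ≠ 0) : ∃ c > 0, ∃ O ∈ 𝓝ˢ U, ∀ᶠ z in 𝓝 x, DecreasesAt X f V O c z := by
  obtain ⟨W, Vt, hW, hxW, hWX₀, hVt, heq, hneg⟩ := hV.2.2.2 x hx hVx
  have hcont : ContinuousOn (fun p : E × 𝒰 => fderiv ℝ Vt p.1 (f p.1 p.2)) (W ×ˢ Set.univ) :=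
    ((hVt.continuousOn_fderiv_of_isOpen hW le_rfl).comp continuousOn_fst
      fun _ hp => hp.1).clm_apply (hf.mono (Set.prod_mono_left hWX₀))
  have hcontx : ContinuousOn (fun u => fderiv ℝ Vt x (f x u)) U :=
    hcont.comp (f := fun u => (x, u)) (by fun_prop) fun u _ => ⟨hxW, trivial⟩
  obtain ⟨m, hm, hmU⟩ :=
    hU.exists_forall_le' hcontx.neg fun u hu => neg_pos.2 (hneg u hu)
  obtain ⟨c, hc, hcm⟩ := exists_between hm
  have hopen : IsOpen ((W ×ˢ Set.univ) ∩
      (fun p : E × 𝒰 => fderiv ℝ Vt p.1 (f p.1 p.2)) ⁻¹' Set.Iio (-c)) :=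
    hcont.isOpen_inter_preimage (hW.prod isOpen_univ) isOpen_Iio
  have hxU : {x} ×ˢ U ⊆ (W ×ˢ Set.univ) ∩
      (fun p : E × 𝒰 => fderiv ℝ Vt p.1 (f p.1 p.2)) ⁻¹' Set.Iio (-c) := by
    rintro ⟨z, u⟩ ⟨rfl, hu⟩
    exact ⟨⟨hxW, trivial⟩, lt_neg_of_lt_neg (hcm.trans_le (hmU u hu))⟩
  obtain ⟨N, O, hN, hO, hxN, hUO, hsub⟩ :=
    generalized_tube_lemma isCompact_singleton hU hopen hxU
  refine ⟨c, hc, O, hO.mem_nhdsSet.2 hUO, ?_⟩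
  filter_upwards [hN.mem_nhds (hxN rfl), hW.mem_nhds hxW] with z hzN hzW
  refine ⟨Vt, hVt.contDiffAt (hW.mem_nhds hzW), ?_, fun u hu => ?_⟩
  · filter_upwards [mem_nhdsWithin_of_mem_nhds (hW.mem_nhds hzW), self_mem_nhdsWithin]
      with y hyW hyX using heq y ⟨hyW, hyX⟩
  · exact le_of_lt (hsub (Set.mk_mem_prod hzN hu)).2

theorem exists_forall_decreasesAt (hV : UDecrease X₀ X f U V) (hU : IsCompact U)
    (hf : ContinuousOn (fun p : E × 𝒰 => f p.1 p.2) (X₀ ×ˢ Set.univ)) {a : ℝ} (ha : 0 < a)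
    (b : ℝ) :
    ∃ c > 0, ∃ O ∈ 𝓝ˢ U, ∀ x ∈ X, V x ∈ Set.Icc a b → DecreasesAt X f V O c x := by
  have hband : IsCompact {x ∈ X | a ≤ V x ∧ V x ≤ max a b} :=
    hV.2.2.1 a (max a b) ha.le (le_max_left a b)
  suffices ∃ c > 0, ∃ O ∈ 𝓝ˢ U, ∀ x ∈ {x ∈ X | a ≤ V x ∧ V x ≤ max a b},
      DecreasesAt X f V O c x by
    obtain ⟨c, hc, O, hO, hd⟩ := this
    exact ⟨c, hc, O, hO, fun x hx hVx => hd x ⟨hx, hVx.1, hVx.2.trans (le_max_right a b)⟩⟩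
  refine hband.induction_on
    (p := fun S => ∃ c > 0, ∃ O ∈ 𝓝ˢ U, ∀ x ∈ S, DecreasesAt X f V O c x) ?_ ?_ ?_ ?_
  · exact ⟨1, one_pos, Set.univ, univ_mem, fun x hx => hx.elim⟩
  · rintro S S' hSS' ⟨c, hc, O, hO, hS'⟩
    exact ⟨c, hc, O, hO, fun x hx => hS' x (hSS' hx)⟩
  · rintro S S' ⟨c, hc, O, hO, hS⟩ ⟨c', hc', O', hO', hS'⟩
    refine ⟨min c c', lt_min hc hc', O ∩ O', inter_mem hO hO', ?_⟩
    rintro x (hx | hx)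
    · exact (hS x hx).mono Set.inter_subset_left (min_le_left c c')
    · exact (hS' x hx).mono Set.inter_subset_right (min_le_right c c')
  · rintro x ⟨hx, hax, -⟩
    obtain ⟨c, hc, O, hO, hd⟩ := hV.exists_eventually_decreasesAt hU hf hx (ha.trans_le hax).ne'
    exact ⟨_, mem_nhdsWithin_of_mem_nhds hd, c, hc, O, hO, fun z hz => hz⟩

theorem antitoneOn_comp (hV : UDecrease X₀ X f U V) (hU : IsCompact U)
    (hf : ContinuousOn (fun p : E × 𝒰 => f p.1 p.2) (X₀ ×ˢ Set.univ))
    (hξ : IsTrajectory X f ω ξ) (hω : ∀ t, 0 ≤ t → ω t ∈ U) :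
    AntitoneOn (V ∘ ξ) (Set.Ici 0) := by
  intro s hs t _ hst
  have hsub : Set.Icc s t ⊆ Set.Ici 0 := fun τ hτ => le_trans hs hτ.1
  obtain ⟨b, hb⟩ := isCompact_Icc.bddAbove_image ((hξ.continuousOn_comp hV.2.1).mono hsub)
  refine le_of_forall_gt_imp_ge_of_dense fun a (hsa : V (ξ s) < a) => ?_
  have ha : 0 < a := (hV.1 (ξ s) (hξ.mapsTo hs)).trans_lt hsa
  obtain ⟨c, hc, O, hO, hd⟩ := hV.exists_forall_decreasesAt hU hf ha b
  exact hξ.le_of_le_of_decreasesAt hV.2.1 hc.le hd hs hst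
    (fun τ hτ => subset_of_mem_nhdsSet hO (hω τ (hsub hτ)))
    (fun τ hτ => hb (Set.mem_image_of_mem _ hτ)) hsa.le

theorem exists_isCompact_mapsTo (hV : UDecrease X₀ X f U V) (hU : IsCompact U)
    (hf : ContinuousOn (fun p : E × 𝒰 => f p.1 p.2) (X₀ ×ˢ Set.univ))
    (hξ : IsTrajectory X f ω ξ) (hω : ∀ t, 0 ≤ t → ω t ∈ U) :
    ∃ C ⊆ X, IsCompact C ∧ Set.MapsTo ξ (Set.Ici 0) C :=
  ⟨{x ∈ X | V x ≤ V (ξ 0)}, fun _ hx => hx.1,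
    hV.isCompact_sublevel (hV.1 (ξ 0) (hξ.mapsTo Set.self_mem_Ici)),
    fun _ ht => ⟨hξ.mapsTo ht, hV.antitoneOn_comp hU hf hξ hω Set.self_mem_Ici ht ht⟩⟩

theorem tendsto_comp_zero (hV : UDecrease X₀ X f U V) (hU : IsCompact U)
    (hf : ContinuousOn (fun p : E × 𝒰 => f p.1 p.2) (X₀ ×ˢ Set.univ))
    (hξ : IsTrajectory X f ω ξ) (hω : convTo ω U) {b : ℝ} (hb : ∀ t, 0 ≤ t → V (ξ t) ≤ b) :
    Tendsto (V ∘ ξ) atTop (𝓝 0) := by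
  have hnonneg : ∀ᶠ t in atTop, 0 ≤ V (ξ t) :=
    (eventually_ge_atTop 0).mono fun t ht => hV.1 (ξ t) (hξ.mapsTo ht)
  refine tendsto_order.2 ⟨fun a ha => hnonneg.mono fun t ht => ha.trans_le ht, fun a' ha' => ?_⟩
  obtain ⟨a, ha, haa'⟩ := exists_between ha'
  obtain ⟨c, hc, O, hO, hd⟩ := hV.exists_forall_decreasesAt hU hf ha b
  obtain ⟨T, hT⟩ := eventually_atTop.1
    ((hω.eventually_mem hU hO).and (eventually_ge_atTop (0 : ℝ)))
  obtain ⟨s, hTs, hsa⟩ := hξ.exists_ge_le_of_decreasesAt hc hd (hT T le_rfl).2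
    (fun τ hτ => (hT τ hτ).1) (fun τ hτ => hb τ (hT τ hτ).2)
  filter_upwards [eventually_ge_atTop s] with t hst
  refine lt_of_le_of_lt ?_ haa'
  exact hξ.le_of_le_of_decreasesAt hV.2.1 hc.le hd (hT s hTs).2 hst
    (fun τ hτ => (hT τ (hTs.trans hτ.1)).1) (fun τ hτ => hb τ (hT τ (hTs.trans hτ.1)).2) hsa

theorem convTo_comp_image_ZV {M : Type*} [PseudoMetricSpace M] {g : E → M} {C : Set E}
    (hV : UDecrease X₀ X f U V) (hU : IsCompact U)
    (hf : ContinuousOn (fun p : E × 𝒰 => f p.1 p.2) (X₀ ×ˢ Set.univ))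
    (hξ : IsTrajectory X f ω ξ) (hω : convTo ω U) (hC : IsCompact C) (hCX : C ⊆ X)
    (hξC : Set.MapsTo ξ (Set.Ici 0) C) (hg : ContinuousOn g X) :
    convTo (g ∘ ξ) (g '' ZV X V) := by
  have hVC : ContinuousOn V C := hV.2.1.mono hCX
  obtain ⟨b, hb⟩ := hC.bddAbove_image hVC
  have hlim : Tendsto (V ∘ ξ) atTop (𝓝 0) :=
    hV.tendsto_comp_zero hU hf hξ hω fun t ht => hb (Set.mem_image_of_mem V (hξC ht))
  refine convTo_iff_eventually_mem_thickening.2 fun ε hε => ?_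
  exact eventually_mem_of_tendsto_of_isCompact (g := g) hC hVC (hg.mono hCX)
    ((eventually_ge_atTop 0).mono fun t ht => hξC ht) hlim Metric.isOpen_thickening
    fun x hx hVx => Metric.self_subset_thickening hε _ ⟨x, ⟨hCX hx, hVx⟩, rfl⟩

end UDecrease

theorem stmt15_general {E 𝒰 𝒴 : Type*} [NormedAddCommGroup E] [NormedSpace ℝ E]
    [PseudoMetricSpace 𝒰] [PseudoMetricSpace 𝒴] {X₀ X : Set E} {f : E → 𝒰 → E}
    (hf : ContinuousOn (fun p : E × 𝒰 => f p.1 p.2) (X₀ ×ˢ Set.univ))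
    {h : E → 𝒴} (hh : ContinuousOn h X) {VU : Set 𝒰 → E → ℝ}
    (hVU : ∀ U : Set 𝒰, IsCompact U → UDecrease X₀ X f U (VU U))
    {ω : ℝ → 𝒰} (hω : Precomp ω) {ξ : ℝ → E} (hξ : IsTrajectory X f ω ξ) :
    Precomp ξ ∧ Precomp (fun t => h (ξ t)) ∧
    ∀ U : Set 𝒰, IsCompact U → convTo ω U →
      convTo ξ (ZV X (VU U)) ∧ convTo (fun t => h (ξ t)) (h '' ZV X (VU U)) := by
  obtain ⟨K, hK, hωK⟩ := hω
  obtain ⟨C, hCX, hC, hξC⟩ := (hVU K hK).exists_isCompact_mapsTo hK hf hξ hωK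
  refine ⟨⟨C, hC, fun t ht => hξC ht⟩, ⟨h '' C, hC.image_of_continuousOn (hh.mono hCX),
    fun t ht => Set.mem_image_of_mem h (hξC ht)⟩, fun U hU hωU => ⟨?_, ?_⟩⟩
  · simpa only [Function.id_comp, Set.image_id] using
      (hVU U hU).convTo_comp_image_ZV hU hf hξ hωU hC hCX hξC continuousOn_id
  · exact (hVU U hU).convTo_comp_image_ZV hU hf hξ hωU hC hCX hξC hh

/-- under the Lyapunov hypothesis of Theorem 1, every trajectory
and output are precompact, and whenever `ω → U` (U compact) the state approaches
`Z_{V_U}` and the output approaches `h(Z_{V_U})`. -/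
theorem stmt15 {n : ℕ} {𝒰 𝒴 : Type*} [MetricSpace 𝒰] [CompleteSpace 𝒰]
    [MeasurableSpace 𝒰] [BorelSpace 𝒰] [MetricSpace 𝒴] [CompleteSpace 𝒴]
    (X₀ X : Set (Fin n → ℝ)) (hX₀ : IsOpen X₀) (hXsub : X ⊆ X₀)
    (f : (Fin n → ℝ) → 𝒰 → (Fin n → ℝ))
    (hf : ContinuousOn (fun p : (Fin n → ℝ) × 𝒰 => f p.1 p.2) (X₀ ×ˢ (Set.univ : Set 𝒰)))
    (h : (Fin n → ℝ) → 𝒴) (hh : ContinuousOn h X)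
    (γ : ℝ≥0 → ℝ≥0) (hγ : KInfty γ)
    (VU : Set 𝒰 → ((Fin n → ℝ) → ℝ))
    (hVU : ∀ U : Set 𝒰, IsCompact U → UDecrease X₀ X f U (VU U) ∧
      EMetric.diam (h '' ZV X (VU U)) ≤ extK γ (EMetric.diam U))
    (ω : ℝ → 𝒰) (hmeas : Measurable ω) (hpre : Precomp ω)
    (ξ : ℝ → (Fin n → ℝ)) (hξlip : LocallyLipschitz ξ)
    (hξX : ∀ t : ℝ, 0 ≤ t → ξ t ∈ X)
    (hode : ∀ᵐ t : ℝ ∂volume, 0 ≤ t → HasDerivAt ξ (f (ξ t) (ω t)) t) :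
    Precomp ξ ∧ Precomp (fun t => h (ξ t)) ∧
    ∀ U : Set 𝒰, IsCompact U → convTo ω U →
      convTo ξ (ZV X (VU U)) ∧ convTo (fun t => h (ξ t)) (h '' ZV X (VU U)) :=
  stmt15_general hf hh (fun U hU => (hVU U hU).1) hpre
    ⟨hξlip.locallyLipschitzOn, fun t ht => hξX t ht, hode⟩
end
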